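/- arXiv:2503.13114 — 2 statements merged into one kernel-verified Lean document; each statement's English description precedes it below -/
import Mathlib

section
/- Let Π_0 = (I⊗I + Z⊗Z)/2 and define the encoding isometry V of the two-qubit repetition code. For single-qubit states ρ and their logical encodings ρ_L with Π_0 ρ_L Π_0 supported in the +1 eigenspace of Z⊗Z, the stabilizer robustness is preserved: R_F(Π_0 ρ_L Π_0) = R_F(ρ), where on the left F is the set of two-qubit stabilizer states and on the right the set of single-qubit stabilizer states. In particular, the optimal two-qubit stabilizer state σ achieving Π_0ρ_LΠ_0 ≤ R·σ satisfies σ = Π_0 σ Π_0. -/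
open Matrix BigOperators Kronecker
open scoped ComplexOrder

noncomputable section

def sigmaX : Matrix (Fin 2) (Fin 2) ℂ := !![0, 1; 1, 0]
def sigmaY : Matrix (Fin 2) (Fin 2) ℂ := !![0, -Complex.I; Complex.I, 0]
def sigmaZ : Matrix (Fin 2) (Fin 2) ℂ := !![1, 0; 0, -1]

/-- A single-qubit stabilizer state (octahedron of Bloch vectors). -/
def IsStab1 (σ : Matrix (Fin 2) (Fin 2) ℂ) : Prop :=
  ∃ a b c : ℝ, |a| + |b| + |c| ≤ 1 ∧
    σ = (1/2 : ℂ) • (1 + (a : ℂ) • sigmaX + (b : ℂ) • sigmaY + (c : ℂ) • sigmaZ)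

def Rob1 (ρ : Matrix (Fin 2) (Fin 2) ℂ) : ℝ :=
  sInf {l : ℝ | 1 ≤ l ∧ ∃ s, IsStab1 s ∧ ((l : ℂ) • s - ρ).PosSemidef}

def pauliMat : Fin 4 → Matrix (Fin 2) (Fin 2) ℂ :=
  ![1, sigmaX, sigmaY, sigmaZ]

/-- A signed two-qubit Pauli operator. -/
def signedPauli2 (s : Bool) (a b : Fin 4) :
    Matrix (Fin 2 × Fin 2) (Fin 2 × Fin 2) ℂ :=
  (if s then (-1 : ℂ) else 1) • (pauliMat a ⊗ₖ pauliMat b)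

/-- A pure two-qubit stabilizer state: a trace-one projector
`(1+g₁)(1+g₂)/4` onto the joint `+1` eigenspace of two commuting signed Paulis. -/
def IsPureStab2 (σ : Matrix (Fin 2 × Fin 2) (Fin 2 × Fin 2) ℂ) : Prop :=
  ∃ (s₁ s₂ : Bool) (a₁ b₁ a₂ b₂ : Fin 4),
    signedPauli2 s₁ a₁ b₁ * signedPauli2 s₂ a₂ b₂
      = signedPauli2 s₂ a₂ b₂ * signedPauli2 s₁ a₁ b₁ ∧
    σ = (1/4 : ℂ) • ((1 + signedPauli2 s₁ a₁ b₁) * (1 + signedPauli2 s₂ a₂ b₂)) ∧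
    σ.trace = 1

/-- A two-qubit stabilizer state: a convex mixture of pure stabilizer states. -/
def IsStab2 (σ : Matrix (Fin 2 × Fin 2) (Fin 2 × Fin 2) ℂ) : Prop :=
  σ ∈ convexHull ℝ {τ | IsPureStab2 τ}

def Rob2 (ρ : Matrix (Fin 2 × Fin 2) (Fin 2 × Fin 2) ℂ) : ℝ :=
  sInf {l : ℝ | 1 ≤ l ∧ ∃ s, IsStab2 s ∧ ((l : ℂ) • s - ρ).PosSemidef}

/-- Projector onto the `+1` eigenspace of `Z⊗Z`. -/
def Pi0 : Matrix (Fin 2 × Fin 2) (Fin 2 × Fin 2) ℂ :=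
  (1/2 : ℂ) • (1 + sigmaZ ⊗ₖ sigmaZ)

/-!
Compressing with the isometry `V|j⟩ = |jj⟩` sends `A ⊗ B` to the Hadamard product of `A` and `B`,
and Hadamard products of Pauli matrices are Pauli matrices up to a sign, or zero. A signed Pauli
`g` either commutes with `Π₀ = V V†` or has `V† g V = 0`, so the compression of a pure stabilizer
state `(1 + g₁)(1 + g₂)/4` is a multiple of `(1 + h₁)(1 + h₂)` or of `1 + h` with `h`, `h₁`, `h₂`
multiples of Pauli matrices; hence `V† σ V` lies in the cone over the octahedron for every
stabilizer state `σ`. Conversely `V s V†` is a stabilizer state for every vertex `s` of the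
octahedron. As `tr V† σ V ≤ 1`, the compression of a feasible `σ` can be topped up by a multiple of
the identity to a feasible single-qubit state, so both robustnesses are infima of the same set.
If `σ` is optimal, rescaling `V† σ V` to unit trace cannot improve on it, which forces
`tr Π₀ σ = 1`.
-/

section General

theorem add_sum_smul_mem_of_convex {E ι : Type*} [AddCommGroup E] [Module ℝ E] [Fintype ι]
    {K : Set E} (hK : Convex ℝ K) {m : E} {v : ι → E} (hm : m ∈ K)
    (hadd : ∀ i, m + v i ∈ K) (hsub : ∀ i, m - v i ∈ K) {t : ι → ℝ} (ht : ∑ i, |t i| ≤ 1) :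
    m + ∑ i, t i • v i ∈ K := by
  let w : Option ι → ℝ := fun o => o.elim (1 - ∑ i, |t i|) fun i => |t i|
  let z : Option ι → E := fun o => o.elim m fun i => m + (SignType.sign (t i) : ℝ) • v i
  have hw : ∀ o ∈ Finset.univ, 0 ≤ w o := by
    rintro (_ | i) -
    exacts [sub_nonneg.2 ht, abs_nonneg (t i)]
  have hz : ∀ o ∈ Finset.univ, z o ∈ K := by
    rintro (_ | i) -
    · exact hm
    · rcases lt_trichotomy (t i) 0 with h | h | h
      · simpa [z, h, ← sub_eq_add_neg] using hsub i
      · simpa [z, h] using hm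
      · simpa [z, h] using hadd i
  have hsum : ∑ o, w o • z o = m + ∑ i, t i • v i := by
    simp only [Fintype.sum_option, w, z, Option.elim, smul_add, smul_smul, abs_mul_sign,
      Finset.sum_add_distrib, ← Finset.sum_smul, sub_smul, one_smul]
    abel
  exact hsum ▸ hK.sum_mem hw (by simp [w, Fintype.sum_option]) hz

theorem one_add_mul_one_add {R : Type*} [NonAssocSemiring R] (a b : R) :
    (1 + a) * (1 + b) = 1 + a + b + a * b := by
  rw [add_mul, one_mul, mul_add, mul_one]
  abel

theorem convex_posSemidef {n 𝕜 : Type*} [RCLike 𝕜] : Convex ℝ {A : Matrix n n 𝕜 | A.PosSemidef} :=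
  fun _ hA _ hB _ _ hs ht _ => (hA.smul hs).add (hB.smul ht)

theorem isStarProjection_half_one_add {𝕜 A : Type*} [RCLike 𝕜] [Ring A] [StarRing A]
    [Algebra 𝕜 A] [StarModule 𝕜 A] {g : A} (hself : IsSelfAdjoint g) (hsq : g * g = 1) :
    IsStarProjection ((1/2 : 𝕜) • (1 + g)) where
  isIdempotentElem := by
    have hdouble : (1 + g) * (1 + g) = (2 : 𝕜) • (1 + g) := by
      rw [one_add_mul_one_add, hsq, two_smul]
      abel
    rw [IsIdempotentElem, smul_mul_smul_comm, hdouble, smul_smul]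
    norm_num
  isSelfAdjoint := by
    rw [IsSelfAdjoint, star_smul, star_add, star_one, hself.star_eq]
    simp

variable {𝕜 n : Type*} [RCLike 𝕜] [Fintype n] {A P : Matrix n n 𝕜}

theorem trace_mul_le_trace_of_isStarProjection (hA : A.PosSemidef) (hP : IsStarProjection P) :
    (P * A).trace ≤ A.trace := by
  classical
  have hcompl := (hA.mul_mul_conjTranspose_same (1 - P)).trace_nonneg
  rwa [← star_eq_conjTranspose, hP.one_sub.isSelfAdjoint.star_eq, trace_mul_comm,
    ← Matrix.mul_assoc, hP.one_sub.isIdempotentElem.eq, Matrix.sub_mul, Matrix.one_mul,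
    trace_sub, sub_nonneg] at hcompl

open MatrixOrder in
theorem mul_eq_zero_of_conjTranspose_mul_mul_eq_zero {B : Matrix n n 𝕜} (hA : A.PosSemidef)
    (h : Bᴴ * A * B = 0) : A * B = 0 := by
  classical
  obtain ⟨C, rfl⟩ := CStarAlgebra.nonneg_iff_eq_star_mul_self.mp hA.nonneg
  have hCB : (C * B)ᴴ * (C * B) = 0 := by
    simpa only [conjTranspose_mul, star_eq_conjTranspose, Matrix.mul_assoc] using h
  rw [Matrix.mul_assoc, conjTranspose_mul_self_eq_zero.1 hCB, Matrix.mul_zero]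

theorem eq_mul_mul_of_trace_mul_eq (hA : A.PosSemidef) (hP : IsStarProjection P)
    (h : (P * A).trace = A.trace) : A = P * A * P := by
  classical
  have hPh : Pᴴ = P := hP.isSelfAdjoint
  have hQ : (1 - P)ᴴ = 1 - P := hP.one_sub.isSelfAdjoint
  have hcompl : (1 - P)ᴴ * A * (1 - P) = 0 := by
    rw [← (hA.conjTranspose_mul_mul_same (1 - P)).trace_eq_zero_iff, hQ, trace_mul_comm,
      ← Matrix.mul_assoc, hP.one_sub.isIdempotentElem.eq, Matrix.sub_mul, Matrix.one_mul,
      trace_sub, h, sub_self]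
  have hright : A = A * P := by
    simpa [Matrix.mul_sub, sub_eq_zero] using
      mul_eq_zero_of_conjTranspose_mul_mul_eq_zero hA hcompl
  have hleft : A = P * A := by
    simpa only [conjTranspose_mul, hA.isHermitian.eq, hPh] using congrArg conjTranspose hright
  rw [← hleft, ← hright]

end General

section Pauli

theorem isHermitian_pauliMat (a : Fin 4) : (pauliMat a).IsHermitian := by
  ext i j
  fin_cases a <;> fin_cases i <;> fin_cases j <;> simp [pauliMat, sigmaX, sigmaY, sigmaZ]

theorem pauliMat_mul_self (a : Fin 4) : pauliMat a * pauliMat a = 1 := by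
  ext i j
  fin_cases a <;> fin_cases i <;> fin_cases j <;>
    simp [pauliMat, sigmaX, sigmaY, sigmaZ, Matrix.mul_apply]

theorem pauliMat_zero : pauliMat 0 = 1 := rfl

theorem pauliMat_ne_zero (a : Fin 4) : pauliMat a ≠ 0 := fun h => by
  simpa [h] using pauliMat_mul_self a

theorem pauliMat_mul_eq_neg {a b : Fin 4} (ha : a ≠ 0) (hb : b ≠ 0) (hab : a ≠ b) :
    pauliMat a * pauliMat b = -(pauliMat b * pauliMat a) := by
  ext i j
  fin_cases a <;> fin_cases b <;> first | contradiction | skip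
  all_goals
    fin_cases i <;> fin_cases j <;> simp [pauliMat, sigmaX, sigmaY, sigmaZ, Matrix.mul_apply]

theorem exists_pauliMat_mul_eq_smul (a b : Fin 4) :
    ∃ ε : ℤˣ, pauliMat a * pauliMat b = ε • (pauliMat b * pauliMat a) := by
  by_cases ha : a = 0
  · exact ⟨1, by simp [ha, pauliMat_zero]⟩
  by_cases hb : b = 0
  · exact ⟨1, by simp [hb, pauliMat_zero]⟩
  by_cases hab : a = b
  · exact ⟨1, by simp [hab]⟩
  · exact ⟨-1, by simpa using pauliMat_mul_eq_neg ha hb hab⟩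

theorem eq_zero_or_eq_zero_of_commute_of_ne {a b : Fin 4} (ha : a ≠ 0) (hb : b ≠ 0) (hab : a ≠ b)
    {t u : ℝ} (h : Commute (t • pauliMat a) (u • pauliMat b)) : t = 0 ∨ u = 0 := by
  have hprod : pauliMat a * pauliMat b ≠ 0 := fun h0 => pauliMat_ne_zero b <| by
    rw [← Matrix.one_mul (pauliMat b), ← pauliMat_mul_self a, Matrix.mul_assoc, h0,
      Matrix.mul_zero]
  have hanti : (t * u) • (pauliMat a * pauliMat b) = -((t * u) • (pauliMat a * pauliMat b)) :=
    calc (t * u) • (pauliMat a * pauliMat b)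
        = (u • pauliMat b) * (t • pauliMat a) := by rw [← smul_mul_smul_comm, h.eq]
      _ = -((t * u) • (pauliMat a * pauliMat b)) := by
        rw [smul_mul_smul_comm, mul_comm u, pauliMat_mul_eq_neg ha hb hab, smul_neg, neg_neg]
  have : IsAddTorsionFree (Matrix (Fin 2) (Fin 2) ℂ) := .of_isTorsionFree ℝ _
  simpa [hprod] using self_eq_neg.1 hanti

/-- A Pauli matrix up to a complex factor of modulus at most one. Allowing the factor to be zero
makes this class closed under Hadamard products. -/
def IsPauliMultiple (h : Matrix (Fin 2) (Fin 2) ℂ) : Prop :=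
  ∃ (ω : ℂ) (a : Fin 4), ‖ω‖ ≤ 1 ∧ h = ω • pauliMat a

theorem isPauliMultiple_pauliMat_mul (a b : Fin 4) :
    IsPauliMultiple (pauliMat a * pauliMat b) := by
  let phase : Matrix (Fin 4) (Fin 4) ℂ := !![1, 1, 1, 1; 1, 1, Complex.I, -Complex.I;
    1, -Complex.I, 1, Complex.I; 1, Complex.I, -Complex.I, 1]
  -- Modulo phases the Pauli matrices form the Klein four-group, whose law is XOR on the indices.
  refine ⟨phase a b, a ^^^ b, ?_, ?_⟩
  · fin_cases a <;> fin_cases b <;> simp [phase]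
  · ext i j
    fin_cases a <;> fin_cases b <;> fin_cases i <;> fin_cases j <;>
      simp [phase, pauliMat, sigmaX, sigmaY, sigmaZ, Matrix.mul_apply]

theorem isPauliMultiple_pauliMat_hadamard (a b : Fin 4) :
    IsPauliMultiple (pauliMat a ⊙ pauliMat b) := by
  let phase : Matrix (Fin 4) (Fin 4) ℂ := !![1, 0, 0, 1; 0, 1, 1, 0; 0, 1, -1, 0; 1, 0, 0, 1]
  let index : Matrix (Fin 4) (Fin 4) (Fin 4) := !![0, 0, 0, 3; 0, 1, 2, 0; 0, 2, 1, 0; 3, 0, 0, 0]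
  refine ⟨phase a b, index a b, ?_, ?_⟩
  · fin_cases a <;> fin_cases b <;> simp [phase]
  · ext i j
    fin_cases a <;> fin_cases b <;> fin_cases i <;> fin_cases j <;>
      simp [phase, index, pauliMat, sigmaX, sigmaY, sigmaZ]

theorem IsPauliMultiple.smul {h : Matrix (Fin 2) (Fin 2) ℂ} (hh : IsPauliMultiple h) {ω : ℂ}
    (hω : ‖ω‖ ≤ 1) : IsPauliMultiple (ω • h) := by
  obtain ⟨μ, a, hμ, rfl⟩ := hh
  exact ⟨ω * μ, a, by simpa using mul_le_one₀ hω (norm_nonneg μ) hμ, smul_smul ..⟩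

theorem IsPauliMultiple.hadamard {h k : Matrix (Fin 2) (Fin 2) ℂ} (hh : IsPauliMultiple h)
    (hk : IsPauliMultiple k) : IsPauliMultiple (h ⊙ k) := by
  obtain ⟨ω, a, hω, rfl⟩ := hh
  obtain ⟨μ, b, hμ, rfl⟩ := hk
  rw [smul_hadamard, hadamard_smul]
  exact ((isPauliMultiple_pauliMat_hadamard a b).smul hμ).smul hω

theorem IsPauliMultiple.exists_real_smul {h : Matrix (Fin 2) (Fin 2) ℂ} (hh : IsPauliMultiple h)
    (hherm : h.IsHermitian) : ∃ (t : ℝ) (a : Fin 4), |t| ≤ 1 ∧ h = t • pauliMat a := by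
  obtain ⟨ω, a, hω, rfl⟩ := hh
  have hreal : star ω • pauliMat a = ω • pauliMat a := by
    simpa only [conjTranspose_smul, (isHermitian_pauliMat a).eq] using hherm.eq
  obtain ⟨t, rfl⟩ := Complex.conj_eq_iff_real.1 (smul_left_injective ℂ (pauliMat_ne_zero a) hreal)
  exact ⟨t, a, by simpa using hω, Complex.coe_smul t _⟩

end Pauli

section Octahedron

/-- The qubit operator `(1/2) (r₀ I + r₁ X + r₂ Y + r₃ Z)` with real Pauli coordinates `r`; its
trace is `r₀`, and `(r₁, r₂, r₃)` is its Bloch vector when `r₀ = 1`. -/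
def ofPauliCoords : (Fin 4 → ℝ) →ₗ[ℝ] Matrix (Fin 2) (Fin 2) ℂ :=
  (1/2 : ℝ) • Fintype.linearCombination ℝ pauliMat

/-- The cone over the stabilizer octahedron, in Pauli coordinates: its points are the coordinates
of the subnormalized and supernormalized single-qubit stabilizer states. -/
def octahedralCone : Set (Fin 4 → ℝ) := {r | ∑ i : Fin 3, |r i.succ| ≤ r 0}

theorem ofPauliCoords_apply (r : Fin 4 → ℝ) :
    ofPauliCoords r = (1/2 : ℝ) • (r 0 • 1 + ∑ i : Fin 3, r i.succ • pauliMat i.succ) := by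
  simp [ofPauliCoords, Fintype.linearCombination_apply, Fin.sum_univ_succ, pauliMat_zero]

theorem ofPauliCoords_bloch (x y z : ℝ) : ofPauliCoords ![1, x, y, z] =
    (1/2 : ℂ) • (1 + (x : ℂ) • sigmaX + (y : ℂ) • sigmaY + (z : ℂ) • sigmaZ) := by
  rw [ofPauliCoords_apply, ← Complex.coe_smul]
  simp [Fin.sum_univ_three, pauliMat, add_assoc]

theorem ofPauliCoords_single (a : Fin 4) (t : ℝ) :
    ofPauliCoords (Pi.single a t) = (1/2 : ℝ) • t • pauliMat a := by
  rw [ofPauliCoords, LinearMap.smul_apply, Fintype.linearCombination_apply_single]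

theorem trace_ofPauliCoords (r : Fin 4 → ℝ) : (ofPauliCoords r).trace = r 0 := by
  have htrace (i : Fin 3) : (pauliMat i.succ).trace = 0 := by
    fin_cases i <;> simp [pauliMat, sigmaX, sigmaY, sigmaZ, trace_fin_two]
  simp [ofPauliCoords_apply, trace_sum, htrace, mul_comm _ (2 : ℂ)]

theorem isStab1_iff {σ : Matrix (Fin 2) (Fin 2) ℂ} :
    IsStab1 σ ↔ ∃ r ∈ octahedralCone, r 0 = 1 ∧ σ = ofPauliCoords r := by
  constructor
  · rintro ⟨a, b, c, habc, rfl⟩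
    exact ⟨![1, a, b, c], by simpa [octahedralCone, Fin.sum_univ_three] using habc, rfl,
      (ofPauliCoords_bloch a b c).symm⟩
  · rintro ⟨r, hr, hr0, rfl⟩
    refine ⟨r 1, r 2, r 3, by simpa [octahedralCone, Fin.sum_univ_three, hr0] using hr, ?_⟩
    rw [← ofPauliCoords_bloch]
    congr with i
    fin_cases i <;> simp [hr0]

theorem convex_octahedralCone : Convex ℝ octahedralCone := by
  intro r hr q hq s t hs ht _
  calc ∑ i : Fin 3, |s * r i.succ + t * q i.succ|
      ≤ ∑ i : Fin 3, (s * |r i.succ| + t * |q i.succ|) := by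
        refine Finset.sum_le_sum fun i _ => (abs_add_le _ _).trans_eq ?_
        rw [abs_mul, abs_mul, abs_of_nonneg hs, abs_of_nonneg ht]
    _ = s * ∑ i : Fin 3, |r i.succ| + t * ∑ i : Fin 3, |q i.succ| := by
        rw [Finset.sum_add_distrib, Finset.mul_sum, Finset.mul_sum]
    _ ≤ s * r 0 + t * q 0 :=
        add_le_add (mul_le_mul_of_nonneg_left hr hs) (mul_le_mul_of_nonneg_left hq ht)

theorem smul_mem_octahedralCone {r : Fin 4 → ℝ} (hr : r ∈ octahedralCone) {c : ℝ} (hc : 0 ≤ c) :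
    c • r ∈ octahedralCone := by
  simpa [octahedralCone, abs_mul, abs_of_nonneg hc, ← Finset.mul_sum] using
    mul_le_mul_of_nonneg_left hr hc

theorem smul_one_add_smul_pauliMat_mem_image {p t : ℝ} (h : |t| ≤ p) (a : Fin 4) :
    p • 1 + t • pauliMat a ∈ ofPauliCoords '' octahedralCone := by
  refine ⟨Pi.single 0 (2 * p) + Pi.single a (2 * t), ?_, ?_⟩
  · cases a using Fin.cases with
    | zero =>
      suffices 0 ≤ 2 * p + 2 * t by simpa [octahedralCone] using this
      linarith [neg_le_of_abs_le h]
    | succ i =>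
      simpa [octahedralCone, Pi.single_apply, (Fin.succ_ne_zero i).symm, apply_ite abs, abs_mul]
        using h
  · simp only [map_add, ofPauliCoords_single, pauliMat_zero, smul_smul]
    module

theorem one_add_mem_image_of_isPauliMultiple {h : Matrix (Fin 2) (Fin 2) ℂ} (hh : IsPauliMultiple h)
    (hherm : h.IsHermitian) : 1 + h ∈ ofPauliCoords '' octahedralCone := by
  obtain ⟨t, a, ht, rfl⟩ := hh.exists_real_smul hherm
  simpa using smul_one_add_smul_pauliMat_mem_image ht a

theorem one_add_smul_one_mul_one_add_mem_image {t u : ℝ} (ht : |t| ≤ 1) (hu : |u| ≤ 1) (a : Fin 4) :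
    (1 + t • (1 : Matrix (Fin 2) (Fin 2) ℂ)) * (1 + u • pauliMat a) ∈
      ofPauliCoords '' octahedralCone := by
  have ht' : 0 ≤ 1 + t := by linarith [neg_le_of_abs_le ht]
  convert smul_one_add_smul_pauliMat_mem_image (p := 1 + t) (t := (1 + t) * u)
    (by rw [abs_mul, abs_of_nonneg ht']; exact mul_le_of_le_one_right ht' hu) a using 1
  rw [← one_smul ℝ (1 : Matrix (Fin 2) (Fin 2) ℂ), smul_smul, mul_one, ← add_smul,
    smul_one_mul, smul_add, smul_smul, smul_smul, mul_one]

theorem one_add_mul_one_add_mem_image_of_same_axis {t u : ℝ} (ht : |t| ≤ 1) (hu : |u| ≤ 1)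
    (a : Fin 4) :
    (1 + t • pauliMat a) * (1 + u • pauliMat a) ∈ ofPauliCoords '' octahedralCone := by
  have habs : |t + u| ≤ 1 + t * u := by
    obtain ⟨ht₁, ht₂⟩ := abs_le.1 ht
    obtain ⟨hu₁, hu₂⟩ := abs_le.1 hu
    rw [abs_le]
    constructor <;> nlinarith
  convert smul_one_add_smul_pauliMat_mem_image habs a using 1
  rw [one_add_mul_one_add, smul_mul_smul_comm, pauliMat_mul_self]
  module

theorem one_add_mul_one_add_mem_image_of_commute {h k : Matrix (Fin 2) (Fin 2) ℂ}
    (hh : IsPauliMultiple h) (hk : IsPauliMultiple k) (hherm : h.IsHermitian)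
    (kherm : k.IsHermitian) (hhk : Commute h k) :
    (1 + h) * (1 + k) ∈ ofPauliCoords '' octahedralCone := by
  obtain ⟨t, a, ht, rfl⟩ := hh.exists_real_smul hherm
  obtain ⟨u, b, hu, rfl⟩ := hk.exists_real_smul kherm
  have hcomm : Commute (1 + t • pauliMat a) (1 + u • pauliMat b) :=
    (Commute.one_left _).add_left ((Commute.one_right _).add_right hhk)
  by_cases ha : a = 0
  · exact ha ▸ one_add_smul_one_mul_one_add_mem_image ht hu b
  by_cases hb : b = 0
  · exact hcomm.eq ▸ hb ▸ one_add_smul_one_mul_one_add_mem_image hu ht a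
  by_cases hab : a = b
  · exact hab ▸ one_add_mul_one_add_mem_image_of_same_axis ht hu a
  rcases eq_zero_or_eq_zero_of_commute_of_ne ha hb hab hhk with rfl | rfl
  · simpa using one_add_mem_image_of_isPauliMultiple hk kherm
  · simpa using one_add_mem_image_of_isPauliMultiple hh hherm

end Octahedron

section Code

/-- The encoding isometry `|j⟩ ↦ |jj⟩` of the two-qubit repetition code. -/
def encV : Matrix (Fin 2 × Fin 2) (Fin 2) ℂ :=
  (1 : Matrix (Fin 2 × Fin 2) (Fin 2 × Fin 2) ℂ).submatrix (Equiv.refl _) fun j => (j, j)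

/-- Encoding of qubit operators into the code space, `ρ ↦ V ρ V†`; like `decode`, it is taken
real-linear because it is applied to real convex combinations. -/
def encode : Matrix (Fin 2) (Fin 2) ℂ →ₗ[ℝ] Matrix (Fin 2 × Fin 2) (Fin 2 × Fin 2) ℂ where
  toFun ρ := encV * ρ * encVᴴ
  map_add' ρ τ := by rw [Matrix.mul_add, Matrix.add_mul]
  map_smul' t ρ := by rw [Matrix.mul_smul, Matrix.smul_mul, RingHom.id_apply]

/-- Compression of two-qubit operators to the code space, read as qubit operators: `σ ↦ V† σ V`. -/
def decode : Matrix (Fin 2 × Fin 2) (Fin 2 × Fin 2) ℂ →ₗ[ℝ] Matrix (Fin 2) (Fin 2) ℂ where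
  toFun σ := encVᴴ * σ * encV
  map_add' σ τ := by rw [Matrix.mul_add, Matrix.add_mul]
  map_smul' t σ := by rw [Matrix.mul_smul, Matrix.smul_mul, RingHom.id_apply]

/-- The logical Pauli operators `I⊗I`, `X⊗X`, `Y⊗X`, `Z⊗I` of the code. -/
def logicalPauli (a : Fin 4) : Matrix (Fin 2 × Fin 2) (Fin 2 × Fin 2) ℂ :=
  pauliMat a ⊗ₖ pauliMat (![0, 1, 1, 0] a)

variable {ρ : Matrix (Fin 2) (Fin 2) ℂ} {σ : Matrix (Fin 2 × Fin 2) (Fin 2 × Fin 2) ℂ}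

theorem encode_apply (ρ : Matrix (Fin 2) (Fin 2) ℂ) : encode ρ = encV * ρ * encVᴴ := rfl

theorem decode_apply (σ : Matrix (Fin 2 × Fin 2) (Fin 2 × Fin 2) ℂ) :
    decode σ = encVᴴ * σ * encV := rfl

theorem decode_eq_submatrix (σ : Matrix (Fin 2 × Fin 2) (Fin 2 × Fin 2) ℂ) :
    decode σ = σ.submatrix (fun j => (j, j)) fun j => (j, j) := by
  rw [decode_apply, encV, conjTranspose_submatrix, conjTranspose_one, one_submatrix_mul,
    mul_submatrix_one, submatrix_submatrix]
  rfl

theorem decode_kronecker (A B : Matrix (Fin 2) (Fin 2) ℂ) : decode (A ⊗ₖ B) = A ⊙ B :=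
  decode_eq_submatrix _

theorem encV_conjTranspose_mul_self : encVᴴ * encV = 1 := by
  rw [← Matrix.mul_one encVᴴ, ← decode_apply, decode_eq_submatrix]
  exact submatrix_one _ fun _ _ h => congrArg Prod.fst h

theorem encV_mul_conjTranspose_self : encV * encVᴴ = Pi0 := by
  ext ⟨i, j⟩ ⟨k, l⟩
  fin_cases i <;> fin_cases j <;> fin_cases k <;> fin_cases l <;>
    norm_num [encV, Pi0, sigmaZ, Matrix.mul_apply, Matrix.one_apply]

theorem Pi0_eq : Pi0 = (1/2 : ℂ) • (1 + signedPauli2 false 3 3) := by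
  simp [Pi0, signedPauli2, pauliMat]

theorem decode_one : decode 1 = 1 := by
  rw [decode_apply, Matrix.mul_one, encV_conjTranspose_mul_self]

theorem decode_encode (ρ : Matrix (Fin 2) (Fin 2) ℂ) : decode (encode ρ) = ρ := by
  rw [decode_apply, encode_apply, Matrix.mul_assoc, Matrix.mul_assoc, encV_conjTranspose_mul_self,
    Matrix.mul_one, ← Matrix.mul_assoc, encV_conjTranspose_mul_self, Matrix.one_mul]

theorem trace_encode (ρ : Matrix (Fin 2) (Fin 2) ℂ) : (encode ρ).trace = ρ.trace := by
  rw [encode_apply, trace_mul_comm, ← Matrix.mul_assoc, encV_conjTranspose_mul_self, Matrix.one_mul]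

theorem trace_decode (σ : Matrix (Fin 2 × Fin 2) (Fin 2 × Fin 2) ℂ) :
    (decode σ).trace = (Pi0 * σ).trace := by
  rw [decode_apply, trace_mul_comm, ← Matrix.mul_assoc, encV_mul_conjTranspose_self]

theorem isHermitian_encode (h : ρ.IsHermitian) : (encode ρ).IsHermitian :=
  isHermitian_mul_mul_conjTranspose encV h

theorem isHermitian_decode (h : σ.IsHermitian) : (decode σ).IsHermitian :=
  isHermitian_conjTranspose_mul_mul encV h

theorem posSemidef_encode (h : ρ.PosSemidef) : (encode ρ).PosSemidef :=
  h.mul_mul_conjTranspose_same encV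

theorem posSemidef_decode (h : σ.PosSemidef) : (decode σ).PosSemidef :=
  h.conjTranspose_mul_mul_same encV

theorem decode_mul_decode (A B : Matrix (Fin 2 × Fin 2) (Fin 2 × Fin 2) ℂ) :
    decode A * decode B = decode (A * Pi0 * B) := by
  simp only [decode_apply, ← encV_mul_conjTranspose_self, Matrix.mul_assoc]

theorem decode_Pi0_mul (σ : Matrix (Fin 2 × Fin 2) (Fin 2 × Fin 2) ℂ) :
    decode (Pi0 * σ) = decode σ := by
  rw [← Matrix.one_mul Pi0, ← decode_mul_decode, decode_one, Matrix.one_mul]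

theorem decode_mul_Pi0 (σ : Matrix (Fin 2 × Fin 2) (Fin 2 × Fin 2) ℂ) :
    decode (σ * Pi0) = decode σ := by
  rw [← Matrix.mul_one (σ * Pi0), ← decode_mul_decode, decode_one, Matrix.mul_one]

theorem decode_mul_of_commute_left {A : Matrix (Fin 2 × Fin 2) (Fin 2 × Fin 2) ℂ}
    (h : Commute Pi0 A) (B : Matrix (Fin 2 × Fin 2) (Fin 2 × Fin 2) ℂ) :
    decode (A * B) = decode A * decode B := by
  rw [decode_mul_decode, ← h.eq, mul_assoc, decode_Pi0_mul]

theorem decode_mul_of_commute_right (A : Matrix (Fin 2 × Fin 2) (Fin 2 × Fin 2) ℂ)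
    {B : Matrix (Fin 2 × Fin 2) (Fin 2 × Fin 2) ℂ} (h : Commute Pi0 B) :
    decode (A * B) = decode A * decode B := by
  rw [decode_mul_decode, mul_assoc, h.eq, ← mul_assoc, decode_mul_Pi0]

end Code

section SignedPauli

variable (s s₁ s₂ : Bool) (a b a₁ b₁ a₂ b₂ : Fin 4)

theorem isHermitian_signedPauli2 : (signedPauli2 s a b).IsHermitian := by
  rw [signedPauli2, IsHermitian, conjTranspose_smul, conjTranspose_kronecker,
    (isHermitian_pauliMat a).eq, (isHermitian_pauliMat b).eq]
  cases s <;> simp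

theorem signedPauli2_mul_self : signedPauli2 s a b * signedPauli2 s a b = 1 := by
  rw [signedPauli2, smul_mul_smul_comm, ← mul_kronecker_mul, pauliMat_mul_self, pauliMat_mul_self,
    one_kronecker_one]
  cases s <;> simp

theorem isStarProjection_Pi0 : IsStarProjection Pi0 :=
  Pi0_eq ▸ isStarProjection_half_one_add (isHermitian_signedPauli2 ..) (signedPauli2_mul_self ..)

theorem isPauliMultiple_decode_signedPauli2 : IsPauliMultiple (decode (signedPauli2 s a b)) := by
  rw [signedPauli2, decode_apply, Matrix.mul_smul, Matrix.smul_mul, ← decode_apply,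
    decode_kronecker]
  exact (isPauliMultiple_pauliMat_hadamard a b).smul (by cases s <;> simp)

theorem isPauliMultiple_decode_signedPauli2_mul :
    IsPauliMultiple (decode (signedPauli2 s₁ a₁ b₁ * signedPauli2 s₂ a₂ b₂)) := by
  rw [signedPauli2, signedPauli2, smul_mul_smul_comm, ← mul_kronecker_mul, decode_apply,
    Matrix.mul_smul, Matrix.smul_mul, ← decode_apply, decode_kronecker]
  exact ((isPauliMultiple_pauliMat_mul a₁ a₂).hadamard (isPauliMultiple_pauliMat_mul b₁ b₂)).smul
    (by cases s₁ <;> cases s₂ <;> simp)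

theorem exists_signedPauli2_mul_eq_smul : ∃ ε : ℤˣ, signedPauli2 s₁ a₁ b₁ * signedPauli2 s₂ a₂ b₂ =
    ε • (signedPauli2 s₂ a₂ b₂ * signedPauli2 s₁ a₁ b₁) := by
  obtain ⟨ε, hε⟩ := exists_pauliMat_mul_eq_smul a₁ a₂
  obtain ⟨δ, hδ⟩ := exists_pauliMat_mul_eq_smul b₁ b₂
  refine ⟨ε * δ, ?_⟩
  simp only [signedPauli2, smul_mul_smul_comm, ← mul_kronecker_mul, hε, hδ, smul_kronecker,
    kronecker_smul, mul_comm (ite (s₂ = true) _ _), smul_comm (_ : ℂ) ε, smul_comm (_ : ℂ) δ,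
    mul_smul, smul_comm δ ε]

theorem commute_Pi0_or_decode_eq_zero :
    Commute Pi0 (signedPauli2 s a b) ∨ decode (signedPauli2 s a b) = 0 := by
  obtain ⟨ε, hε⟩ := exists_signedPauli2_mul_eq_smul false s 3 3 a b
  rcases Int.units_eq_one_or ε with rfl | rfl
  · rw [one_smul] at hε
    exact .inl (Pi0_eq ▸ ((Commute.one_left _).add_left hε).smul_left _)
  · right
    have hswap : Pi0 * signedPauli2 s a b = signedPauli2 s a b * (1 - Pi0) := by
      rw [Units.neg_smul, one_smul] at hε
      rw [Pi0_eq, smul_mul_assoc, add_mul, hε, mul_sub, mul_smul_comm, mul_add, one_mul, mul_one]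
      module
    rw [← decode_Pi0_mul, hswap, mul_sub, mul_one, map_sub, decode_mul_Pi0, sub_self]

end SignedPauli

section Decode

variable {σ : Matrix (Fin 2 × Fin 2) (Fin 2 × Fin 2) ℂ}

theorem decode_one_add_mul_one_add_mem_image {s₁ s₂ : Bool} {a₁ b₁ a₂ b₂ : Fin 4}
    (h : Commute (signedPauli2 s₁ a₁ b₁) (signedPauli2 s₂ a₂ b₂)) :
    decode ((1 + signedPauli2 s₁ a₁ b₁) * (1 + signedPauli2 s₂ a₂ b₂)) ∈
      ofPauliCoords '' octahedralCone := by
  have pauli₁ := isPauliMultiple_decode_signedPauli2 s₁ a₁ b₁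
  have pauli₂ := isPauliMultiple_decode_signedPauli2 s₂ a₂ b₂
  have pauli₁₂ := isPauliMultiple_decode_signedPauli2_mul s₁ s₂ a₁ b₁ a₂ b₂
  have herm₁ := isHermitian_signedPauli2 s₁ a₁ b₁
  have herm₂ := isHermitian_signedPauli2 s₂ a₂ b₂
  have code₁ := commute_Pi0_or_decode_eq_zero s₁ a₁ b₁
  have code₂ := commute_Pi0_or_decode_eq_zero s₂ a₂ b₂
  generalize signedPauli2 s₁ a₁ b₁ = g₁ at *
  generalize signedPauli2 s₂ a₂ b₂ = g₂ at *
  have herm₁₂ : (g₁ * g₂).IsHermitian := (herm₁.commute_iff herm₂).1 h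
  have hexpand : decode ((1 + g₁) * (1 + g₂)) = 1 + decode g₁ + decode g₂ + decode (g₁ * g₂) := by
    rw [one_add_mul_one_add, map_add, map_add, map_add, decode_one]
  have of_mul_eq (hmul : decode (g₁ * g₂) = decode g₁ * decode g₂)
      (hmul' : decode (g₂ * g₁) = decode g₂ * decode g₁) :
      decode ((1 + g₁) * (1 + g₂)) ∈ ofPauliCoords '' octahedralCone := by
    rw [hexpand, hmul, ← one_add_mul_one_add]
    exact one_add_mul_one_add_mem_image_of_commute pauli₁ pauli₂ (isHermitian_decode herm₁)
      (isHermitian_decode herm₂) (by rw [Commute, SemiconjBy, ← hmul, ← hmul', h.eq])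
  rcases code₁ with code₁ | zero₁
  · exact of_mul_eq (decode_mul_of_commute_left code₁ g₂) (decode_mul_of_commute_right g₂ code₁)
  rcases code₂ with code₂ | zero₂
  · exact of_mul_eq (decode_mul_of_commute_right g₁ code₂) (decode_mul_of_commute_left code₂ g₁)
  rw [hexpand, zero₁, zero₂, add_zero, add_zero]
  exact one_add_mem_image_of_isPauliMultiple pauli₁₂ (isHermitian_decode herm₁₂)

theorem IsPureStab2.decode_mem_image (hσ : IsPureStab2 σ) :
    decode σ ∈ ofPauliCoords '' octahedralCone := by
  obtain ⟨s₁, s₂, a₁, b₁, a₂, b₂, hcomm, rfl, -⟩ := hσ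
  obtain ⟨r, hr, hdecode⟩ := decode_one_add_mul_one_add_mem_image hcomm
  refine ⟨(1/4 : ℝ) • r, smul_mem_octahedralCone hr (by norm_num), ?_⟩
  rw [map_smul, hdecode, ← map_smul, ← Complex.coe_smul]
  norm_num

theorem IsPureStab2.isStarProjection (hσ : IsPureStab2 σ) : IsStarProjection σ := by
  obtain ⟨s₁, s₂, a₁, b₁, a₂, b₂, hcomm, rfl, -⟩ := hσ
  have hproj := fun s a b => isStarProjection_half_one_add (𝕜 := ℂ)
    (isHermitian_signedPauli2 s a b) (signedPauli2_mul_self s a b)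
  rw [show (1/4 : ℂ) = 1/2 * (1/2) by norm_num, ← smul_mul_smul_comm]
  exact (hproj s₁ a₁ b₁).mul (hproj s₂ a₂ b₂) (((Commute.one_left _).add_left
    ((Commute.one_right _).add_right hcomm)).smul_left _ |>.smul_right _)

open MatrixOrder in
theorem IsPureStab2.posSemidef (hσ : IsPureStab2 σ) : σ.PosSemidef :=
  nonneg_iff_posSemidef.1 hσ.isStarProjection.nonneg

theorem IsPureStab2.trace_eq_one (hσ : IsPureStab2 σ) : σ.trace = 1 := by
  obtain ⟨_, _, _, _, _, _, -, -, htrace⟩ := hσ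
  exact htrace

theorem IsStab2.posSemidef (hσ : IsStab2 σ) : σ.PosSemidef :=
  convexHull_min (fun _ hτ => hτ.posSemidef : {τ | IsPureStab2 τ} ⊆ {τ | τ.PosSemidef})
    convex_posSemidef hσ

theorem IsStab2.trace_eq_one (hσ : IsStab2 σ) : σ.trace = 1 :=
  convexHull_min (fun _ hτ => hτ.trace_eq_one : {τ | IsPureStab2 τ} ⊆ {τ | τ.trace = 1})
    ((convex_singleton (1 : ℂ)).linear_preimage (traceLinearMap _ ℝ ℂ)) hσ

theorem IsStab2.decode_mem_image (hσ : IsStab2 σ) : decode σ ∈ ofPauliCoords '' octahedralCone :=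
  convexHull_min (fun _ hτ => hτ.decode_mem_image :
      {τ | IsPureStab2 τ} ⊆ decode ⁻¹' (ofPauliCoords '' octahedralCone))
    ((convex_octahedralCone.linear_image ofPauliCoords).linear_preimage decode) hσ

end Decode

section Encode

theorem logicalPauli_eq (a : Fin 4) : logicalPauli a = signedPauli2 false a (![0, 1, 1, 0] a) := by
  simp [logicalPauli, signedPauli2]

theorem logicalPauli_zero : logicalPauli 0 = 1 := one_kronecker_one

theorem logicalPauli_mul_encV (a : Fin 4) : logicalPauli a * encV = encV * pauliMat a := by
  ext ⟨i, j⟩ k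
  fin_cases a <;> fin_cases i <;> fin_cases j <;> fin_cases k <;>
    simp [logicalPauli, encV, pauliMat, sigmaX, sigmaY, sigmaZ, Matrix.mul_apply, Matrix.one_apply]

theorem encode_pauliMat (a : Fin 4) : encode (pauliMat a) = logicalPauli a * Pi0 := by
  rw [encode_apply, ← logicalPauli_mul_encV, Matrix.mul_assoc, encV_mul_conjTranspose_self]

theorem commute_logicalPauli_Pi0 (a : Fin 4) : Commute (logicalPauli a) Pi0 := by
  have hL : (logicalPauli a).IsHermitian := logicalPauli_eq a ▸ isHermitian_signedPauli2 ..
  exact (hL.commute_iff isStarProjection_Pi0.isSelfAdjoint).2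
    (encode_pauliMat a ▸ isHermitian_encode (isHermitian_pauliMat a))

theorem encode_ofPauliCoords (r : Fin 4 → ℝ) :
    encode (ofPauliCoords r) = Pi0 * ((1/2 : ℝ) • ∑ a, r a • logicalPauli a) * Pi0 := by
  have hconj (a : Fin 4) : Pi0 * logicalPauli a * Pi0 = encode (pauliMat a) := by
    rw [← (commute_logicalPauli_Pi0 a).eq, mul_assoc, isStarProjection_Pi0.isIdempotentElem.eq,
      encode_pauliMat]
  simp only [ofPauliCoords, LinearMap.smul_apply, Fintype.linearCombination_apply, map_smul,
    map_sum, mul_smul_comm, smul_mul_assoc, Finset.mul_sum, Finset.sum_mul, hconj]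

theorem isPureStab2_encode (s : Bool) (i : Fin 3) :
    IsPureStab2 (encode (ofPauliCoords
      (Pi.single 0 1 + Pi.single i.succ (if s then -1 else 1)))) := by
  have hlogical : signedPauli2 s i.succ (![0, 1, 1, 0] i.succ) =
      (if s then -1 else 1 : ℝ) • logicalPauli i.succ := by
    cases s <;> simp [signedPauli2, logicalPauli]
  have hZZ : signedPauli2 false 3 3 = (2 : ℂ) • Pi0 - 1 := by
    rw [Pi0_eq, smul_smul]
    norm_num
  have hcomm := commute_logicalPauli_Pi0 i.succ
  refine ⟨s, false, i.succ, ![0, 1, 1, 0] i.succ, 3, 3, ?_, ?_, ?_⟩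
  · rw [hlogical, hZZ]
    exact ((hcomm.smul_right _).sub_right (Commute.one_right _)).smul_left _
  · rw [hlogical, hZZ, add_sub_cancel, map_add, map_add, ofPauliCoords_single, ofPauliCoords_single,
      map_smul, map_smul, map_smul, map_smul, encode_pauliMat, encode_pauliMat, logicalPauli_zero,
      one_smul, ← smul_add, ← smul_mul_assoc, ← add_mul, mul_smul_comm, smul_smul,
      ← Complex.coe_smul]
    norm_num
  · rw [trace_encode, trace_ofPauliCoords]
    simp

theorem isStab2_encode {s : Matrix (Fin 2) (Fin 2) ℂ} (hs : IsStab1 s) : IsStab2 (encode s) := by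
  obtain ⟨r, hr, hr0, rfl⟩ := isStab1_iff.1 hs
  let L := encode ∘ₗ ofPauliCoords
  let m := L (Pi.single 0 1)
  let v : Fin 3 → _ := fun i => L (Pi.single i.succ 1)
  have hadd : ∀ i, m + v i ∈ convexHull ℝ {τ | IsPureStab2 τ} := fun i => by
    rw [← map_add]
    exact subset_convexHull ℝ _ (isPureStab2_encode false i)
  have hsub : ∀ i, m - v i ∈ convexHull ℝ {τ | IsPureStab2 τ} := fun i => by
    rw [sub_eq_add_neg, ← map_neg, ← map_add, ← Pi.single_neg]
    exact subset_convexHull ℝ _ (isPureStab2_encode true i)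
  have hm : m ∈ convexHull ℝ {τ | IsPureStab2 τ} := by
    have := (convex_convexHull ℝ _).midpoint_mem (hadd 0) (hsub 0)
    rwa [midpoint_add_sub] at this
  have hr_eq : r = Pi.single 0 1 + ∑ i : Fin 3, r i.succ • Pi.single i.succ 1 := by
    conv_lhs => rw [← Finset.univ_sum_single r, Fin.sum_univ_succ, hr0]
    simp only [← Pi.single_smul, smul_eq_mul, mul_one]
  rw [hr_eq, map_add, map_add, map_sum, map_sum]
  simp only [map_smul]
  exact add_sum_smul_mem_of_convex (convex_convexHull ℝ _) hm hadd hsub (hr.trans_eq hr0)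

theorem encode_ofPauliCoords_bloch (x y z : ℝ) :
    encode (ofPauliCoords ![1, x, y, z]) =
      Pi0 * ((1/2 : ℂ) • (1 + (x : ℂ) • (sigmaX ⊗ₖ sigmaX)
        + (y : ℂ) • (sigmaY ⊗ₖ sigmaX) + (z : ℂ) • (sigmaZ ⊗ₖ 1))) * Pi0 := by
  rw [encode_ofPauliCoords, ← Complex.coe_smul]
  simp [Fin.sum_univ_four, logicalPauli, pauliMat]

end Encode

section Robustness

variable {ρ : Matrix (Fin 2) (Fin 2) ℂ} {σ : Matrix (Fin 2 × Fin 2) (Fin 2 × Fin 2) ℂ}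

theorem posSemidef_smul_decode_sub {l : ℝ} (h : ((l : ℂ) • σ - encode ρ).PosSemidef) :
    ((l : ℂ) • decode σ - ρ).PosSemidef := by
  simpa only [Complex.coe_smul, map_sub, map_smul, decode_encode] using posSemidef_decode h

theorem IsStab2.apply_zero_le_one (hσ : IsStab2 σ) {r : Fin 4 → ℝ}
    (hr : ofPauliCoords r = decode σ) : r 0 ≤ 1 := by
  have := trace_mul_le_trace_of_isStarProjection hσ.posSemidef isStarProjection_Pi0
  rw [← trace_decode, ← hr, trace_ofPauliCoords, hσ.trace_eq_one] at this
  exact_mod_cast this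

theorem IsStab2.exists_isStab1_posSemidef (hσ : IsStab2 σ) :
    ∃ s, IsStab1 s ∧ (s - decode σ).PosSemidef := by
  obtain ⟨r, hr, hdecode⟩ := hσ.decode_mem_image
  have hr1 := hσ.apply_zero_le_one hdecode
  refine ⟨ofPauliCoords (r + Pi.single 0 (1 - r 0)), isStab1_iff.2 ⟨_, ?_, ?_, rfl⟩, ?_⟩
  · simpa [octahedralCone] using le_trans hr hr1
  · simp
  · rw [map_add, hdecode, add_sub_cancel_left, ofPauliCoords_single, pauliMat_zero]
    exact (PosSemidef.one.smul (sub_nonneg.2 hr1)).smul (by norm_num)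

theorem rob2_encode (ρ : Matrix (Fin 2) (Fin 2) ℂ) : Rob2 (encode ρ) = Rob1 ρ := by
  refine congrArg sInf (Set.ext fun l => and_congr_right fun hl => ⟨?_, ?_⟩)
  · rintro ⟨σ, hσ, hdom⟩
    obtain ⟨s, hs, hsσ⟩ := hσ.exists_isStab1_posSemidef
    refine ⟨s, hs, ?_⟩
    convert (hsσ.smul (zero_le_one.trans hl)).add (posSemidef_smul_decode_sub hdom) using 1
    rw [Complex.coe_smul, smul_sub, Complex.coe_smul, sub_add_sub_cancel]
  · rintro ⟨s, hs, hdom⟩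
    refine ⟨encode s, isStab2_encode hs, ?_⟩
    simpa only [Complex.coe_smul, map_sub, map_smul] using posSemidef_encode hdom

theorem apply_zero_le_of_posSemidef_sub {q r : Fin 4 → ℝ}
    (h : (ofPauliCoords r - ofPauliCoords q).PosSemidef) : q 0 ≤ r 0 := by
  have htrace := h.trace_nonneg
  rw [trace_sub, trace_ofPauliCoords, trace_ofPauliCoords, sub_nonneg] at htrace
  exact_mod_cast htrace

theorem rob1_le_apply_zero {q r : Fin 4 → ℝ} (hr : r ∈ octahedralCone) (hr0 : 1 ≤ r 0)
    (h : (ofPauliCoords r - ofPauliCoords q).PosSemidef) : Rob1 (ofPauliCoords q) ≤ r 0 := by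
  have hpos : 0 < r 0 := zero_lt_one.trans_le hr0
  have hstab : IsStab1 (ofPauliCoords ((r 0)⁻¹ • r)) :=
    isStab1_iff.2 ⟨_, smul_mem_octahedralCone hr (inv_nonneg.2 hpos.le),
      inv_mul_cancel₀ hpos.ne', rfl⟩
  refine csInf_le ⟨1, fun _ hm => hm.1⟩ ⟨hr0, _, hstab, ?_⟩
  rwa [Complex.coe_smul, ← map_smul, smul_inv_smul₀ hpos.ne']

theorem rob1_nonneg (ρ : Matrix (Fin 2) (Fin 2) ℂ) : 0 ≤ Rob1 ρ :=
  Real.sInf_nonneg fun _ hl => zero_le_one.trans hl.1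

theorem trace_Pi0_mul_eq_one_of_optimal {q : Fin 4 → ℝ} (hq : 1 ≤ q 0) (hσ : IsStab2 σ)
    (h : ((Rob1 (ofPauliCoords q) : ℂ) • σ - encode (ofPauliCoords q)).PosSemidef) :
    (Pi0 * σ).trace = 1 := by
  obtain ⟨r, hr, hdecode⟩ := hσ.decode_mem_image
  have hR := rob1_nonneg (ofPauliCoords q)
  have hdom := posSemidef_smul_decode_sub h
  rw [Complex.coe_smul, ← hdecode, ← map_smul] at hdom
  have hR1 : 1 ≤ Rob1 (ofPauliCoords q) * r 0 := hq.trans (apply_zero_le_of_posSemidef_sub hdom)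
  have hRle : Rob1 (ofPauliCoords q) ≤ Rob1 (ofPauliCoords q) * r 0 :=
    rob1_le_apply_zero (smul_mem_octahedralCone hr hR) hR1 hdom
  have hRpos : 0 < Rob1 (ofPauliCoords q) :=
    hR.lt_of_ne' (left_ne_zero_of_mul (zero_lt_one.trans_le hR1).ne')
  have hr0 : r 0 = 1 :=
    (hσ.apply_zero_le_one hdecode).antisymm ((le_mul_iff_one_le_right hRpos).1 hRle)
  rw [← trace_decode, ← hdecode, trace_ofPauliCoords, hr0, Complex.ofReal_one]

theorem repetition_code_preserves_robustness_general (q : Fin 4 → ℝ) (hq : 1 ≤ q 0) :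
    Rob2 (encode (ofPauliCoords q)) = Rob1 (ofPauliCoords q) ∧
      ∀ σ : Matrix (Fin 2 × Fin 2) (Fin 2 × Fin 2) ℂ, IsStab2 σ →
        ((Rob2 (encode (ofPauliCoords q)) : ℂ) • σ - encode (ofPauliCoords q)).PosSemidef →
        σ = Pi0 * σ * Pi0 := by
  rw [rob2_encode]
  refine ⟨rfl, fun σ hσ h => eq_mul_mul_of_trace_mul_eq hσ.posSemidef isStarProjection_Pi0 ?_⟩
  rw [trace_Pi0_mul_eq_one_of_optimal hq hσ h, hσ.trace_eq_one]

end Robustness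

/-- The two-qubit repetition-code encoding
`ρ = (1/2)(I + xX + yY + zZ) ↦ Π₀ ρ_L Π₀` with
`ρ_L = (1/2)(I⊗I + x X⊗X + y Y⊗X + z Z⊗I)` preserves the stabilizer robustness, and
any optimal stabilizer state witnessing the robustness is supported in the `+1`
eigenspace of `Z⊗Z`. -/
theorem repetition_code_preserves_robustness (x y z : ℝ)
    (hball : x^2 + y^2 + z^2 ≤ 1) :
    Rob2 (Pi0 * ((1/2 : ℂ) • (1 + (x : ℂ) • (sigmaX ⊗ₖ sigmaX)
        + (y : ℂ) • (sigmaY ⊗ₖ sigmaX) + (z : ℂ) • (sigmaZ ⊗ₖ 1))) * Pi0)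
      = Rob1 ((1/2 : ℂ) • (1 + (x : ℂ) • sigmaX + (y : ℂ) • sigmaY
        + (z : ℂ) • sigmaZ)) ∧
    ∀ σ : Matrix (Fin 2 × Fin 2) (Fin 2 × Fin 2) ℂ, IsStab2 σ →
      (((Rob2 (Pi0 * ((1/2 : ℂ) • (1 + (x : ℂ) • (sigmaX ⊗ₖ sigmaX)
          + (y : ℂ) • (sigmaY ⊗ₖ sigmaX) + (z : ℂ) • (sigmaZ ⊗ₖ 1))) * Pi0) : ℝ) : ℂ)
          • σ
        - Pi0 * ((1/2 : ℂ) • (1 + (x : ℂ) • (sigmaX ⊗ₖ sigmaX)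
          + (y : ℂ) • (sigmaY ⊗ₖ sigmaX) + (z : ℂ) • (sigmaZ ⊗ₖ 1))) * Pi0).PosSemidef
      → σ = Pi0 * σ * Pi0 := by
  rw [← encode_ofPauliCoords_bloch, ← ofPauliCoords_bloch]
  exact repetition_code_preserves_robustness_general ![1, x, y, z] le_rfl
end
end

section
/- The Choi state of the noisy rotation channel N∘U, where U(ρ) = e^{−iθZ/2} ρ e^{iθZ/2} and N(ρ) = p_0 ρ + p_x XρX + p_y YρY + p_z ZρZ, admits the block decomposition J = (p_0+p_z) Π_0 ρ_L(θ, p_z/(p_0+p_z)) Π_0 + (p_x+p_y) Π_1 ρ_L(−θ, p_y/(p_x+p_y)) Π_1, where Π_i are the eigenprojectors of Z⊗Z and ρ_L(θ,p) = (1/2)(II + (1−2p)(cosθ XX + sinθ YX)). -/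
open Matrix BigOperators Kronecker

noncomputable section

/-- The `Z`-rotation unitary `e^{−iθZ/2}`. -/
def rotZ (θ : ℝ) : Matrix (Fin 2) (Fin 2) ℂ :=
  !![Complex.exp (-(Complex.I * θ / 2)), 0; 0, Complex.exp (Complex.I * θ / 2)]

/-- The maximally entangled vector `(|00⟩ + |11⟩)/√2`. -/
def maxEnt : Fin 2 × Fin 2 → ℂ :=
  fun p => if p.1 = p.2 then ((Real.sqrt 2)⁻¹ : ℝ) else 0

/-- `|Ψ⟩⟨Ψ|` for the maximally entangled state. -/
def maxEntProj : Matrix (Fin 2 × Fin 2) (Fin 2 × Fin 2) ℂ :=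
  vecMulVec maxEnt (star maxEnt)

/-- The logical Bloch-plane state `ρ_L(θ,p) = (1/2)(II + (1−2p)(cosθ XX + sinθ YX))`. -/
def rhoL (θ p : ℝ) : Matrix (Fin 2 × Fin 2) (Fin 2 × Fin 2) ℂ :=
  (1/2 : ℂ) • (1 + ((1 - 2*p : ℝ) : ℂ) •
    (((Real.cos θ : ℝ) : ℂ) • (sigmaX ⊗ₖ sigmaX)
      + ((Real.sin θ : ℝ) : ℂ) • (sigmaY ⊗ₖ sigmaX)))

def PiZZ0 : Matrix (Fin 2 × Fin 2) (Fin 2 × Fin 2) ℂ :=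
  (1/2 : ℂ) • (1 + sigmaZ ⊗ₖ sigmaZ)

def PiZZ1 : Matrix (Fin 2 × Fin 2) (Fin 2 × Fin 2) ℂ :=
  (1/2 : ℂ) • (1 - sigmaZ ⊗ₖ sigmaZ)

/-
Choi states compose: the Choi state of `V ∘ U` is the Choi state of `U` conjugated by `V ⊗ 1`.
Conjugation by a unitary is a `*`-automorphism, so it suffices to follow the three factors of
`|Ψ⟩⟨Ψ| = Π₀ ρ_L(0,0) Π₀` through it. The rotation fixes `Z ⊗ Z` and turns the equatorial Bloch
vector of `ρ_L` by `θ`; `X` and `Y` anticommute with `Z`, so they exchange the two blocks and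
reflect the Bloch vector; `Y` and `Z` moreover reverse its sign, which is `p ↦ 1 - p`. Since `ρ_L`
is affine in `p`, the two contributions to each block merge into one.
-/

theorem neg_kronecker {l m n p R : Type*} [Mul R] [HasDistribNeg R] (A : Matrix l m R)
    (B : Matrix n p R) : (-A) ⊗ₖ B = -(A ⊗ₖ B) := by
  ext
  simp

section LeftConj

variable {m n R : Type*} [Fintype m] [DecidableEq m] [Fintype n] [DecidableEq n]
  [CommRing R] [StarRing R]

variable (n) in
/-- The embedding `U ↦ U ⊗ 1` of the unitary group of the first tensor factor into that of the
whole system. -/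
def leftUnitary : unitaryGroup m R →* unitaryGroup (m × n) R where
  toFun U := ⟨(U : Matrix m m R) ⊗ₖ 1, kronecker_mem_unitary U.2 (one_mem _)⟩
  map_one' := Subtype.ext one_kronecker_one
  map_mul' U V := Subtype.ext <| by simp [← mul_kronecker_mul]

variable (n) in
/-- The unitary channel `U` on the first tensor factor, `ρ ↦ (U ⊗ 1) ρ (U ⊗ 1)ᴴ`. Applied to
`maxEntProj` it yields the Choi state of `U`. -/
def leftConj :
    unitaryGroup m R →* (Matrix (m × n) (m × n) R ≃⋆ₐ[R] Matrix (m × n) (m × n) R) :=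
  (Unitary.conjStarAlgAut R (Matrix (m × n) (m × n) R)).comp (leftUnitary n)

theorem leftConj_apply (U : unitaryGroup m R) (ρ : Matrix (m × n) (m × n) R) :
    leftConj n U ρ = ((U : Matrix m m R) ⊗ₖ 1) * ρ * ((U : Matrix m m R) ⊗ₖ 1)ᴴ :=
  rfl

theorem leftConj_mul_apply (U V : unitaryGroup m R) (ρ : Matrix (m × n) (m × n) R) :
    leftConj n (U * V) ρ = leftConj n U (leftConj n V ρ) := by
  rw [map_mul]
  rfl

theorem leftConj_kronecker (U : unitaryGroup m R) (A : Matrix m m R) (B : Matrix n n R) :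
    leftConj n U (A ⊗ₖ B) = ((U : Matrix m m R) * A * (U : Matrix m m R)ᴴ) ⊗ₖ B := by
  simp [leftConj_apply, conjTranspose_kronecker, ← mul_kronecker_mul]

end LeftConj

theorem isHermitian_sigmaX : sigmaX.IsHermitian := by
  ext i j
  fin_cases i <;> fin_cases j <;> simp [sigmaX]

theorem isHermitian_sigmaY : sigmaY.IsHermitian := by
  ext i j
  fin_cases i <;> fin_cases j <;> simp [sigmaY]

theorem isHermitian_sigmaZ : sigmaZ.IsHermitian := by
  ext i j
  fin_cases i <;> fin_cases j <;> simp [sigmaZ]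

theorem conjTranspose_rotZ (θ : ℝ) : (rotZ θ)ᴴ = rotZ (-θ) := by
  ext i j
  fin_cases i <;> fin_cases j <;> simp [rotZ, ← Complex.exp_conj, Complex.conj_ofNat, neg_div]

/-- The Pauli matrix `X` as an element of the unitary group. -/
def unitaryX : unitaryGroup (Fin 2) ℂ :=
  ⟨sigmaX, by
    rw [mem_unitaryGroup_iff, star_eq_conjTranspose, isHermitian_sigmaX.eq]
    simp [sigmaX, one_fin_two]⟩

/-- The Pauli matrix `Y` as an element of the unitary group. -/
def unitaryY : unitaryGroup (Fin 2) ℂ :=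
  ⟨sigmaY, by
    rw [mem_unitaryGroup_iff, star_eq_conjTranspose, isHermitian_sigmaY.eq]
    simp [sigmaY, one_fin_two]⟩

/-- The Pauli matrix `Z` as an element of the unitary group. -/
def unitaryZ : unitaryGroup (Fin 2) ℂ :=
  ⟨sigmaZ, by
    rw [mem_unitaryGroup_iff, star_eq_conjTranspose, isHermitian_sigmaZ.eq]
    simp [sigmaZ, one_fin_two]⟩

/-- The rotation `e^{−iθZ/2}` as an element of the unitary group. -/
def unitaryRotZ (θ : ℝ) : unitaryGroup (Fin 2) ℂ :=
  ⟨rotZ θ, by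
    rw [mem_unitaryGroup_iff, star_eq_conjTranspose, conjTranspose_rotZ]
    simp [rotZ, one_fin_two, neg_div, ← Complex.exp_add]⟩

/-- The equatorial Pauli matrix `cos φ X + sin φ Y`, i.e. the spin component along the direction
of azimuth `φ` in the equator of the Bloch sphere. Up to its contrast `1 - 2p`, this is the first
tensor factor of the traceless part of `rhoL φ p`. -/
def equatorialPauli (φ : ℝ) : Matrix (Fin 2) (Fin 2) ℂ :=
  ((Real.cos φ : ℝ) : ℂ) • sigmaX + ((Real.sin φ : ℝ) : ℂ) • sigmaY

theorem equatorialPauli_eq_exp (φ : ℝ) :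
    equatorialPauli φ =
      !![0, Complex.exp (-(Complex.I * φ)); Complex.exp (Complex.I * φ), 0] := by
  have hexp : Complex.exp (-(φ * Complex.I)) = Complex.cos φ + -Complex.sin φ * Complex.I := by
    rw [← neg_mul, Complex.exp_mul_I, Complex.cos_neg, Complex.sin_neg]
  simp [equatorialPauli, sigmaX, sigmaY, mul_comm Complex.I, Complex.exp_mul_I, hexp]

theorem rotZ_conj_sigmaZ (θ : ℝ) : rotZ θ * sigmaZ * (rotZ θ)ᴴ = sigmaZ := by
  rw [conjTranspose_rotZ]
  simp [rotZ, sigmaZ, neg_div, ← Complex.exp_add]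

theorem sigmaX_conj_sigmaZ : sigmaX * sigmaZ * sigmaXᴴ = -sigmaZ := by
  rw [isHermitian_sigmaX.eq]
  simp [sigmaX, sigmaZ]

theorem sigmaY_conj_sigmaZ : sigmaY * sigmaZ * sigmaYᴴ = -sigmaZ := by
  rw [isHermitian_sigmaY.eq]
  simp [sigmaY, sigmaZ]

theorem sigmaZ_conj_sigmaZ : sigmaZ * sigmaZ * sigmaZᴴ = sigmaZ := by
  rw [isHermitian_sigmaZ.eq]
  simp [sigmaZ]

theorem rotZ_conj_equatorialPauli (θ φ : ℝ) :
    rotZ θ * equatorialPauli φ * (rotZ θ)ᴴ = equatorialPauli (θ + φ) := by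
  rw [conjTranspose_rotZ]
  simp only [equatorialPauli_eq_exp, rotZ, mul_fin_two, zero_mul, mul_zero, zero_add, add_zero,
    ← Complex.exp_add]
  push_cast
  ring_nf

theorem sigmaX_conj_equatorialPauli (φ : ℝ) :
    sigmaX * equatorialPauli φ * sigmaXᴴ = equatorialPauli (-φ) := by
  rw [isHermitian_sigmaX.eq]
  simp [equatorialPauli_eq_exp, sigmaX]

theorem sigmaY_conj_equatorialPauli (φ : ℝ) :
    sigmaY * equatorialPauli φ * sigmaYᴴ = -equatorialPauli (-φ) := by
  rw [isHermitian_sigmaY.eq]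
  simp [equatorialPauli_eq_exp, sigmaY, mul_right_comm]

theorem sigmaZ_conj_equatorialPauli (φ : ℝ) :
    sigmaZ * equatorialPauli φ * sigmaZᴴ = -equatorialPauli φ := by
  rw [isHermitian_sigmaZ.eq]
  simp [equatorialPauli_eq_exp, sigmaZ]

theorem rhoL_eq_equatorialPauli (φ p : ℝ) :
    rhoL φ p =
      (1 / 2 : ℂ) • (1 + ((1 - 2 * p : ℝ) : ℂ) • (equatorialPauli φ ⊗ₖ sigmaX)) := by
  simp only [rhoL, equatorialPauli, add_kronecker, smul_kronecker]

theorem smul_rhoL_add_smul_rhoL {a b p q : ℝ} (φ : ℝ) (h : a + b = 0 → a * p + b * q = 0) :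
    (a : ℂ) • rhoL φ p + (b : ℂ) • rhoL φ q =
      ((a + b : ℝ) : ℂ) • rhoL φ ((a * p + b * q) / (a + b)) := by
  set r := (a * p + b * q) / (a + b)
  have hmean : (a + b) * r = a * p + b * q := mul_div_cancel_of_imp' h
  have hcontrast : a * (1 - 2 * p) + b * (1 - 2 * q) = (a + b) * (1 - 2 * r) := by
    linear_combination 2 * hmean
  replace hcontrast := congrArg Complex.ofReal hcontrast
  simp only [rhoL_eq_equatorialPauli]
  push_cast at hcontrast ⊢
  linear_combination (norm := module)
    (1 / 2 : ℂ) • hcontrast • (equatorialPauli φ ⊗ₖ sigmaX)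

theorem smul_compress_rhoL_zero_add_smul_compress_rhoL_one {a b : ℝ}
    (P : Matrix (Fin 2 × Fin 2) (Fin 2 × Fin 2) ℂ) (φ : ℝ) (h : a + b = 0 → b = 0) :
    (a : ℂ) • (P * rhoL φ 0 * P) + (b : ℂ) • (P * rhoL φ 1 * P) =
      ((a + b : ℝ) : ℂ) • (P * rhoL φ (b / (a + b)) * P) := by
  have hmix : (a : ℂ) • rhoL φ 0 + (b : ℂ) • rhoL φ 1 =
      ((a + b : ℝ) : ℂ) • rhoL φ (b / (a + b)) := by
    simpa only [mul_zero, mul_one, zero_add] using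
      smul_rhoL_add_smul_rhoL (p := 0) (q := 1) φ (by simpa using h)
  simpa only [Matrix.mul_add, Matrix.add_mul, Matrix.mul_smul, Matrix.smul_mul] using
    congrArg (P * · * P) hmix

section BlockFactors

variable (U : unitaryGroup (Fin 2) ℂ)

theorem leftConj_PiZZ0_of_conj_sigmaZ_eq
    (h : (U : Matrix (Fin 2) (Fin 2) ℂ) * sigmaZ * (U : Matrix (Fin 2) (Fin 2) ℂ)ᴴ = sigmaZ) :
    leftConj (Fin 2) U PiZZ0 = PiZZ0 := by
  rw [PiZZ0, map_smul, map_add, map_one, leftConj_kronecker, h]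

theorem leftConj_PiZZ0_of_conj_sigmaZ_eq_neg
    (h : (U : Matrix (Fin 2) (Fin 2) ℂ) * sigmaZ * (U : Matrix (Fin 2) (Fin 2) ℂ)ᴴ = -sigmaZ) :
    leftConj (Fin 2) U PiZZ0 = PiZZ1 := by
  rw [PiZZ0, map_smul, map_add, map_one, leftConj_kronecker, h, neg_kronecker, ← sub_eq_add_neg,
    PiZZ1]

theorem leftConj_rhoL_of_conj_equatorialPauli_eq {φ ψ : ℝ} (p : ℝ)
    (h : (U : Matrix (Fin 2) (Fin 2) ℂ) * equatorialPauli φ * (U : Matrix (Fin 2) (Fin 2) ℂ)ᴴ =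
      equatorialPauli ψ) :
    leftConj (Fin 2) U (rhoL φ p) = rhoL ψ p := by
  simp only [rhoL_eq_equatorialPauli, map_smul, map_add, map_one, leftConj_kronecker, h]

theorem leftConj_rhoL_of_conj_equatorialPauli_eq_neg {φ ψ : ℝ} (p : ℝ)
    (h : (U : Matrix (Fin 2) (Fin 2) ℂ) * equatorialPauli φ * (U : Matrix (Fin 2) (Fin 2) ℂ)ᴴ =
      -equatorialPauli ψ) :
    leftConj (Fin 2) U (rhoL φ p) = rhoL ψ (1 - p) := by
  simp only [rhoL_eq_equatorialPauli, map_smul, map_add, map_one, leftConj_kronecker, h,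
    neg_kronecker]
  push_cast
  module

end BlockFactors

theorem PiZZ0_eq_diagonal : PiZZ0 = diagonal fun p => if p.1 = p.2 then 1 else 0 := by
  ext ⟨i, j⟩ ⟨k, l⟩
  fin_cases i <;> fin_cases j <;> fin_cases k <;> fin_cases l <;>
    norm_num [PiZZ0, sigmaZ, one_apply]

theorem maxEntProj_apply (i j k l : Fin 2) :
    maxEntProj (i, j) (k, l) = if i = j ∧ k = l then 1 / 2 else 0 := by
  have hsq : (((Real.sqrt 2)⁻¹ : ℝ) : ℂ) * (((Real.sqrt 2)⁻¹ : ℝ) : ℂ) = 1 / 2 := by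
    rw [← Complex.ofReal_mul, ← mul_inv, Real.mul_self_sqrt zero_le_two]
    norm_num
  by_cases hij : i = j <;> by_cases hkl : k = l <;>
    simp_all [maxEntProj, maxEnt, vecMulVec_apply]

theorem maxEntProj_eq_PiZZ0_mul_rhoL_mul_PiZZ0 : maxEntProj = PiZZ0 * rhoL 0 0 * PiZZ0 := by
  ext ⟨i, j⟩ ⟨k, l⟩
  rw [maxEntProj_apply, PiZZ0_eq_diagonal, mul_diagonal, diagonal_mul]
  fin_cases i <;> fin_cases j <;> fin_cases k <;> fin_cases l <;> simp [rhoL, sigmaX]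

theorem leftConj_unitaryRotZ_maxEntProj (θ : ℝ) :
    leftConj (Fin 2) (unitaryRotZ θ) maxEntProj = PiZZ0 * rhoL θ 0 * PiZZ0 := by
  rw [maxEntProj_eq_PiZZ0_mul_rhoL_mul_PiZZ0, map_mul, map_mul,
    leftConj_PiZZ0_of_conj_sigmaZ_eq (unitaryRotZ θ) (rotZ_conj_sigmaZ θ),
    leftConj_rhoL_of_conj_equatorialPauli_eq (unitaryRotZ θ) 0 (rotZ_conj_equatorialPauli θ 0),
    add_zero]

theorem leftConj_unitaryX_mul_unitaryRotZ_maxEntProj (θ : ℝ) :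
    leftConj (Fin 2) (unitaryX * unitaryRotZ θ) maxEntProj = PiZZ1 * rhoL (-θ) 0 * PiZZ1 := by
  rw [leftConj_mul_apply, leftConj_unitaryRotZ_maxEntProj, map_mul, map_mul,
    leftConj_PiZZ0_of_conj_sigmaZ_eq_neg unitaryX sigmaX_conj_sigmaZ,
    leftConj_rhoL_of_conj_equatorialPauli_eq unitaryX 0 (sigmaX_conj_equatorialPauli θ)]

theorem leftConj_unitaryY_mul_unitaryRotZ_maxEntProj (θ : ℝ) :
    leftConj (Fin 2) (unitaryY * unitaryRotZ θ) maxEntProj = PiZZ1 * rhoL (-θ) 1 * PiZZ1 := by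
  rw [leftConj_mul_apply, leftConj_unitaryRotZ_maxEntProj, map_mul, map_mul,
    leftConj_PiZZ0_of_conj_sigmaZ_eq_neg unitaryY sigmaY_conj_sigmaZ,
    leftConj_rhoL_of_conj_equatorialPauli_eq_neg unitaryY 0 (sigmaY_conj_equatorialPauli θ),
    sub_zero]

theorem leftConj_unitaryZ_mul_unitaryRotZ_maxEntProj (θ : ℝ) :
    leftConj (Fin 2) (unitaryZ * unitaryRotZ θ) maxEntProj = PiZZ0 * rhoL θ 1 * PiZZ0 := by
  rw [leftConj_mul_apply, leftConj_unitaryRotZ_maxEntProj, map_mul, map_mul,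
    leftConj_PiZZ0_of_conj_sigmaZ_eq unitaryZ sigmaZ_conj_sigmaZ,
    leftConj_rhoL_of_conj_equatorialPauli_eq_neg unitaryZ 0 (sigmaZ_conj_equatorialPauli θ),
    sub_zero]

theorem choi_block_decomposition_general (θ : ℝ) {p0 px py pz : ℝ}
    (h0z : p0 + pz = 0 → pz = 0) (hxy : px + py = 0 → py = 0) :
    (p0 : ℂ) • ((rotZ θ ⊗ₖ 1) * maxEntProj * (rotZ θ ⊗ₖ 1)ᴴ)
      + (px : ℂ) • (((sigmaX * rotZ θ) ⊗ₖ 1) * maxEntProj * ((sigmaX * rotZ θ) ⊗ₖ 1)ᴴ)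
      + (py : ℂ) • (((sigmaY * rotZ θ) ⊗ₖ 1) * maxEntProj * ((sigmaY * rotZ θ) ⊗ₖ 1)ᴴ)
      + (pz : ℂ) • (((sigmaZ * rotZ θ) ⊗ₖ 1) * maxEntProj * ((sigmaZ * rotZ θ) ⊗ₖ 1)ᴴ)
    = ((p0 + pz : ℝ) : ℂ) • (PiZZ0 * rhoL θ (pz / (p0 + pz)) * PiZZ0)
      + ((px + py : ℝ) : ℂ) • (PiZZ1 * rhoL (-θ) (py / (px + py)) * PiZZ1) := by
  calc
    _ = (p0 : ℂ) • leftConj (Fin 2) (unitaryRotZ θ) maxEntProj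
          + (px : ℂ) • leftConj (Fin 2) (unitaryX * unitaryRotZ θ) maxEntProj
          + (py : ℂ) • leftConj (Fin 2) (unitaryY * unitaryRotZ θ) maxEntProj
          + (pz : ℂ) • leftConj (Fin 2) (unitaryZ * unitaryRotZ θ) maxEntProj := rfl
    _ = ((p0 : ℂ) • (PiZZ0 * rhoL θ 0 * PiZZ0) + (pz : ℂ) • (PiZZ0 * rhoL θ 1 * PiZZ0))
          + ((px : ℂ) • (PiZZ1 * rhoL (-θ) 0 * PiZZ1)
            + (py : ℂ) • (PiZZ1 * rhoL (-θ) 1 * PiZZ1)) := by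
      rw [leftConj_unitaryRotZ_maxEntProj, leftConj_unitaryX_mul_unitaryRotZ_maxEntProj,
        leftConj_unitaryY_mul_unitaryRotZ_maxEntProj, leftConj_unitaryZ_mul_unitaryRotZ_maxEntProj]
      abel
    _ = _ := by
      rw [smul_compress_rhoL_zero_add_smul_compress_rhoL_one PiZZ0 θ h0z,
        smul_compress_rhoL_zero_add_smul_compress_rhoL_one PiZZ1 (-θ) hxy]

/-- The Choi state of the noisy `Z`-rotation `N ∘ U`, with Pauli noise
`N(ρ) = p₀ρ + p_x XρX + p_y YρY + p_z ZρZ` and `U(ρ) = e^{−iθZ/2} ρ e^{iθZ/2}`,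
decomposes into blocks of `Z⊗Z` as
`J = (p₀+p_z) Π₀ ρ_L(θ, p_z/(p₀+p_z)) Π₀ + (p_x+p_y) Π₁ ρ_L(−θ, p_y/(p_x+p_y)) Π₁`. -/
theorem choi_block_decomposition (θ p0 px py pz : ℝ)
    (h0 : 0 ≤ p0) (hx : 0 ≤ px) (hy : 0 ≤ py) (hz : 0 ≤ pz)
    (hsum : p0 + px + py + pz = 1) :
    (p0 : ℂ) • ((rotZ θ ⊗ₖ 1) * maxEntProj * (rotZ θ ⊗ₖ 1)ᴴ)
      + (px : ℂ) • (((sigmaX * rotZ θ) ⊗ₖ 1) * maxEntProj * ((sigmaX * rotZ θ) ⊗ₖ 1)ᴴ)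
      + (py : ℂ) • (((sigmaY * rotZ θ) ⊗ₖ 1) * maxEntProj * ((sigmaY * rotZ θ) ⊗ₖ 1)ᴴ)
      + (pz : ℂ) • (((sigmaZ * rotZ θ) ⊗ₖ 1) * maxEntProj * ((sigmaZ * rotZ θ) ⊗ₖ 1)ᴴ)
    = ((p0 + pz : ℝ) : ℂ) • (PiZZ0 * rhoL θ (pz / (p0 + pz)) * PiZZ0)
      + ((px + py : ℝ) : ℂ) • (PiZZ1 * rhoL (-θ) (py / (px + py)) * PiZZ1) := by
  exact choi_block_decomposition_general θ (fun h => ((add_eq_zero_iff_of_nonneg h0 hz).1 h).2)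
    fun h => ((add_eq_zero_iff_of_nonneg hx hy).1 h).2
end
end
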